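/- arXiv:math/9209218 — 2 statements merged into one kernel-verified Lean document; each statement's English description precedes it below -/
import Mathlib

section
/- Suppose n, l, k are natural numbers with n ≥ 2 and l ≥ 2, and ε is a real number with 0 < ε ≤ 1/2 and l·ε^k ≥ (k+2)·ln n. Then there is a set W ⊆ n × n (identifying n with {0,…,n−1}) such that #(W) ≤ ε·n² and whenever I ⊆ n with #(I) = l and J_0,…,J_{l−1} ⊆ n are pairwise disjoint sets each of cardinality at most k, there are i ∈ I and j < l such that {i} × J_j ⊆ W. -/
open Finset in
lemma aux_A {α : Type*} [Fintype α] [DecidableEq α] (p : ℝ) (B : Finset α) :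
    ∑ W : Finset α, (∏ a, if a ∈ W then p else 1 - p) * (if B ⊆ W then (1:ℝ) else 0)
      = p ^ B.card := by
  have h := Finset.prod_add (fun _ : α => p) (fun a => if a ∈ B then 0 else 1 - p) univ
  have h1 : ∏ a : α, (p + if a ∈ B then 0 else 1 - p) = p ^ B.card := by
    have : ∀ a : α, (p + if a ∈ B then 0 else 1 - p) = if a ∈ B then p else 1 := by
      intro a; split_ifs <;> ring
    simp only [this]
    rw [Finset.prod_ite]
    simp
  rw [← h1, h, Finset.powerset_univ]
  refine Finset.sum_congr rfl fun W _ => ?_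
  rw [Finset.prod_ite]
  have e1 : univ.filter (fun a => a ∈ W) = W := by ext; simp
  have e2 : univ.filter (fun a => a ∉ W) = univ \ W := by ext; simp
  rw [e1, e2, mul_assoc]
  congr 1
  split_ifs with hB
  · rw [mul_one]
    refine Finset.prod_congr rfl fun a ha => ?_
    rw [if_neg]
    intro h'; exact (Finset.mem_sdiff.1 ha).2 (hB h')
  · rw [mul_zero]
    obtain ⟨a, ha, haW⟩ := Finset.not_subset.1 hB
    symm
    exact Finset.prod_eq_zero (i := a) (by simp [haW]) (by simp [ha])

open Finset in
lemma aux_B {α ι : Type*} [Fintype α] [DecidableEq α] [DecidableEq ι] (p : ℝ) (T : Finset ι)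
    (A : ι → Finset α) (hA : (T : Set ι).PairwiseDisjoint A) :
    ∑ W : Finset α, (∏ a, if a ∈ W then p else 1 - p) *
        ∏ t ∈ T, (1 - if A t ⊆ W then (1:ℝ) else 0)
      = ∏ t ∈ T, (1 - p ^ (A t).card) := by
  have key : ∀ x : ι → ℝ, ∏ t ∈ T, (1 - x t)
      = ∑ U ∈ T.powerset, (-1) ^ U.card * ∏ t ∈ U, x t := by
    intro x
    have := Finset.prod_add (fun t => - x t) (fun _ => (1:ℝ)) T
    simp only [Finset.prod_const_one, mul_one, Finset.prod_neg] at this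
    rw [← this]
    exact Finset.prod_congr rfl fun _ _ => by ring
  rw [key]
  simp only [key, Finset.mul_sum]
  rw [Finset.sum_comm]
  refine Finset.sum_congr rfl fun U hU => ?_
  have hUT := Finset.mem_powerset.1 hU
  have hc : (U.biUnion A).card = ∑ t ∈ U, (A t).card :=
    Finset.card_biUnion fun x hx y hy hxy => hA (hUT hx) (hUT hy) hxy
  rw [Finset.prod_pow_eq_pow_sum, ← hc, ← aux_A p, Finset.mul_sum]
  refine Finset.sum_congr rfl fun W _ => ?_
  have : ∏ t ∈ U, (if A t ⊆ W then (1:ℝ) else 0) = if U.biUnion A ⊆ W then 1 else 0 := by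
    rw [Finset.prod_ite_zero]
    simp
  rw [this]; ring

open Finset in
lemma aux_C {α : Type*} [Fintype α] [DecidableEq α] (p : ℝ) :
    ∑ W : Finset α, (∏ a, if a ∈ W then p else 1 - p) * (W.card : ℝ)
      = p * Fintype.card α := by
  have : ∀ W : Finset α, (W.card : ℝ) = ∑ a : α, if {a} ⊆ W then (1:ℝ) else 0 := by
    intro W; simp
  simp only [this, Finset.mul_sum]
  rw [Finset.sum_comm]
  simp only [aux_A]
  simp [mul_comm]

lemma aux_D {n k : ℕ} (J : Finset (Fin n)) (h : J.Nonempty) (hk : J.card ≤ k) :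
    ∃ g : Fin k → Fin n, Finset.univ.image g = J := by
  classical
  have : Nonempty J := h.to_subtype
  obtain ⟨f⟩ : Nonempty (J ↪ Fin k) := by
    apply Function.Embedding.nonempty_of_card_le; simpa using hk
  refine ⟨fun x => (Function.invFun f x : J), ?_⟩
  ext a
  simp only [Finset.mem_image, Finset.mem_univ, true_and]
  constructor
  · rintro ⟨x, rfl⟩; exact (Function.invFun f x).2
  · intro ha
    exact ⟨f ⟨a, ha⟩, by rw [Function.leftInverse_invFun f.injective]⟩

/-- numerical part -/
lemma aux_N (n l k : ℕ) (ε : ℝ) (hn : 2 ≤ n) (hln : l ≤ n) (hk : 1 ≤ k)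
    (hε0 : 0 < ε) (hε1 : ε ≤ 1 / 2)
    (hlk : ((k : ℝ) + 2) * Real.log n ≤ (l : ℝ) * ε ^ k) :
    (n:ℝ) ^ l * (n:ℝ) ^ (k * l) * Real.exp (- ((l:ℝ)^2 * (ε * (1 - 1/(n:ℝ)^2)) ^ k))
      < 1 / (n:ℝ)^2 := by
  have hn' : (2:ℝ) ≤ n := by exact_mod_cast hn
  have hk' : (1:ℝ) ≤ k := by exact_mod_cast hk
  have hln' : (l:ℝ) ≤ n := by exact_mod_cast hln
  have hl0 : (0:ℝ) ≤ l := by positivity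
  have hek : ε ^ k ≤ 1 / 2 := by
    calc ε ^ k ≤ ε ^ 1 := pow_le_pow_of_le_one hε0.le (by linarith) hk
      _ ≤ 1/2 := by simpa using hε1
  have hlog2 := Real.log_two_gt_d9
  have hL : Real.log 2 ≤ Real.log n := Real.log_le_log (by norm_num) hn'
  have hl2 : 2 * ((k : ℝ) + 2) * Real.log n ≤ l := by nlinarith
  have hl5 : 5 ≤ l := by
    have : (4:ℝ) < l := by nlinarith
    exact_mod_cast this
  have hl5' : (5:ℝ) ≤ l := by exact_mod_cast hl5
  have hL1 : 1 ≤ Real.log n := by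
    rw [Real.le_log_iff_exp_le (by linarith)]
    linarith [Real.exp_one_lt_d9]
  have hnk : 2 * ((k:ℝ) + 2) ≤ n := by nlinarith
  have hn2 : (0:ℝ) < (n:ℝ)^2 := by positivity
  have hq : (k:ℝ) * (k+2) * (1/(n:ℝ)^2) ≤ 1/4 := by
    rw [mul_one_div, div_le_iff₀ hn2]; nlinarith
  set η := 1/(n:ℝ)^2 with hη
  have hη0 : 0 < η := by positivity
  have hη1 : η ≤ 1 := by rw [hη, div_le_one hn2]; nlinarith
  have hp : ε ^ k * (1 - k * η) ≤ (ε * (1 - η)) ^ k := by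
    rw [mul_pow]
    have := one_add_mul_le_pow (a := -η) (by linarith) k
    have h2 : 1 - k * η ≤ (1 - η)^k := by
      have e : (1 + -η) = 1 - η := by ring
      rw [e] at this; linarith
    exact mul_le_mul_of_nonneg_left h2 (by positivity)
  have hkη : 0 ≤ 1 - k * η := by nlinarith
  have h3 : ((k : ℝ) + 2) * Real.log n * (1 - k * η) ≤ l * (ε * (1 - η)) ^ k := by
    calc _ ≤ (l * ε ^ k) * (1 - k * η) := mul_le_mul_of_nonneg_right hlk hkη
      _ = l * (ε ^ k * (1 - k * η)) := by ring
      _ ≤ _ := mul_le_mul_of_nonneg_left hp hl0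
  have h4 : l * (((k : ℝ) + 2) * Real.log n * (1 - k * η)) ≤ (l:ℝ)^2 * (ε * (1 - η)) ^ k := by
    calc _ ≤ l * (l * (ε * (1 - η)) ^ k) := mul_le_mul_of_nonneg_left h3 hl0
      _ = _ := by ring
  have hne : (n:ℝ) = Real.exp (Real.log n) := (Real.exp_log (by linarith)).symm
  have e1 : (n:ℝ) ^ l = Real.exp (l * Real.log n) := by
    rw [Real.exp_nat_mul, ← hne]
  have e2 : (n:ℝ) ^ (k*l) = Real.exp (k * l * Real.log n) := by
    rw [← Nat.cast_mul, Real.exp_nat_mul, ← hne]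
  have e3 : η = Real.exp (-(2 * Real.log n)) := by
    rw [Real.exp_neg, hη, one_div]; congr 1
    have := Real.exp_nat_mul (Real.log n) 2
    rw [← hne] at this; rw [← this]; norm_num
  rw [e1, e2, ← Real.exp_add, ← Real.exp_add]
  refine lt_of_lt_of_eq (Real.exp_lt_exp.2 ?_) e3.symm
  have h5 : 2 < l * (1 - k * (k+2) * η) := by nlinarith
  have h6 : 2 * Real.log n < l * (1 - k * (k+2) * η) * Real.log n :=
    mul_lt_mul_of_pos_right h5 (by linarith)
  nlinarith


/-- **Lemma 1B.** Suppose `n, l, k` are natural numbers with `n ≥ 2`, `l ≥ 2`, and `ε` is a real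
number with `0 < ε ≤ 1/2` and `l·ε^k ≥ (k+2)·ln n`.  Then there is a set `W ⊆ n × n` such that
`#(W) ≤ ε·n²` and whenever `I ⊆ n` has `#(I) = l` and `J_0, …, J_{l-1} ⊆ n` are pairwise disjoint
sets each of cardinality at most `k`, there are `i ∈ I` and `j < l` with `{i} × J_j ⊆ W`. -/
theorem stmt_0 (n l k : ℕ) (ε : ℝ) (hn : 2 ≤ n) (hl : 2 ≤ l)
    (hε0 : 0 < ε) (hε1 : ε ≤ 1 / 2)
    (hlk : ((k : ℝ) + 2) * Real.log n ≤ (l : ℝ) * ε ^ k) :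
    ∃ W : Finset (Fin n × Fin n),
      (W.card : ℝ) ≤ ε * (n : ℝ) ^ 2 ∧
      ∀ I : Finset (Fin n), I.card = l →
        ∀ J : Fin l → Finset (Fin n),
          (∀ j, (J j).card ≤ k) →
          (∀ j j', j ≠ j' → Disjoint (J j) (J j')) →
          ∃ i ∈ I, ∃ j : Fin l, ∀ a ∈ J j, (i, a) ∈ W := by
  classical
  by_contra hcon
  push Not at hcon
  have hn' : (2:ℝ) ≤ n := by exact_mod_cast hn
  have hn2 : (0:ℝ) < (n:ℝ)^2 := by positivity
  -- trivial consequences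
  have hJne : ∀ (W : Finset (Fin n × Fin n)) (I : Finset (Fin n)) (J : Fin l → Finset (Fin n)),
      I.card = l → (∀ i ∈ I, ∀ j, ∃ a ∈ J j, (i, a) ∉ W) → ∀ j, (J j).Nonempty := by
    intro W I J hI h j
    obtain ⟨i, hi⟩ : I.Nonempty := Finset.card_pos.1 (by omega)
    obtain ⟨a, ha, _⟩ := h i hi j
    exact ⟨a, ha⟩
  obtain ⟨hln, hk⟩ : l ≤ n ∧ 1 ≤ k := by
    obtain ⟨I, hI, J, hJk, _, hb⟩ := hcon ∅ (by simp; positivity)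
    refine ⟨?_, ?_⟩
    · rw [← hI]; simpa using Finset.card_le_univ I
    · have := hJne _ I J hI hb ⟨0, by omega⟩
      exact le_trans (Finset.card_pos.2 this) (hJk _)
  have hnum := aux_N n l k ε hn hln hk hε0 hε1 hlk
  set p := ε * (1 - 1/(n:ℝ)^2) with hp
  have hη1 : 1/(n:ℝ)^2 ≤ 1 := by rw [div_le_one hn2]; nlinarith
  have hη0 : 0 < 1/(n:ℝ)^2 := by positivity
  have hp0 : 0 ≤ p := mul_nonneg hε0.le (by linarith)
  have hp1 : p ≤ 1 := by nlinarith
  let A : (Fin l → Fin k → Fin n) → Fin n × Fin l → Finset (Fin n × Fin n) :=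
    fun g t => {t.1} ×ˢ (Finset.univ.image (g t.2))
  let S : Finset (Finset (Fin n) × (Fin l → Fin k → Fin n)) :=
    (Finset.powersetCard l Finset.univ ×ˢ Finset.univ).filter fun x =>
      ∀ j j', j ≠ j' → Disjoint (Finset.univ.image (x.2 j)) (Finset.univ.image (x.2 j'))
  let F : Finset (Fin n) × (Fin l → Fin k → Fin n) → Finset (Fin n × Fin n) → ℝ := fun x W =>
    ∏ t ∈ x.1 ×ˢ Finset.univ, (1 - if A x.2 t ⊆ W then (1:ℝ) else 0)
  let w : Finset (Fin n × Fin n) → ℝ := fun W => ∏ a, if a ∈ W then p else 1 - p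
  have hw0 : ∀ W, 0 ≤ w W := fun W => Finset.prod_nonneg fun a _ => by
    split_ifs <;> linarith
  have hF0 : ∀ x W, 0 ≤ F x W := fun x W => Finset.prod_nonneg fun a _ => by
    split_ifs <;> norm_num
  have hpt : ∀ W : Finset (Fin n × Fin n),
      ε * (n:ℝ)^2 ≤ W.card + ε * (n:ℝ)^2 * ∑ x ∈ S, F x W := by
    intro W
    have hs0 : 0 ≤ ∑ x ∈ S, F x W := Finset.sum_nonneg fun x _ => hF0 x W
    by_cases hW : (W.card : ℝ) ≤ ε * (n:ℝ)^2
    · obtain ⟨I, hI, J, hJk, hJd, hb⟩ := hcon W hW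
      have hne := hJne _ I J hI hb
      choose g hg using fun j => aux_D (J j) (hne j) (hJk j)
      have hx : (I, g) ∈ S := by
        simp only [S, Finset.mem_filter, Finset.mem_product, Finset.mem_powersetCard,
          Finset.mem_univ, and_true, Finset.subset_univ, true_and]
        refine ⟨hI, fun j j' h => ?_⟩
        rw [hg, hg]; exact hJd j j' h
      have h1 : F (I, g) W = 1 := by
        refine Finset.prod_eq_one fun t ht => ?_
        rw [if_neg, sub_zero]
        intro hsub
        obtain ⟨a, ha, haW⟩ := hb t.1 (Finset.mem_product.1 ht).1 t.2
        apply haW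
        apply hsub
        simp only [A, hg]
        exact Finset.mem_product.2 ⟨Finset.mem_singleton_self _, ha⟩
      have h2 : 1 ≤ ∑ x ∈ S, F x W := by
        rw [← h1]
        exact Finset.single_le_sum (f := fun x => F x W) (fun x _ => hF0 x W) hx
      have h3 : 0 ≤ (W.card : ℝ) := by positivity
      have h4 : 0 ≤ ε * (n:ℝ)^2 := by positivity
      nlinarith
    · have h4 : 0 ≤ ε * (n:ℝ)^2 * ∑ x ∈ S, F x W := by positivity
      linarith
  have hsum1 : ∑ W, w W = 1 := by
    have := aux_A p (∅ : Finset (Fin n × Fin n))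
    simpa using this
  have hEF : ∀ x ∈ S, ∑ W, w W * F x W ≤ Real.exp (- ((l:ℝ)^2 * p ^ k)) := by
    rintro ⟨I, g⟩ hx
    simp only [S, Finset.mem_filter, Finset.mem_product, Finset.mem_powersetCard,
          Finset.mem_univ, and_true, Finset.subset_univ, true_and] at hx
    obtain ⟨hI, hd⟩ := hx
    have hB := aux_B p (I ×ˢ (Finset.univ : Finset (Fin l))) (A g) (by
      rintro ⟨i, j⟩ _ ⟨i', j'⟩ _ hne
      change Disjoint _ _
      rw [Finset.disjoint_left]
      rintro ⟨a, b⟩ h1 h2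
      simp only [A] at h1 h2
      rw [Finset.mem_product, Finset.mem_singleton] at h1 h2
      have hii : i = i' := h1.1.symm.trans h2.1
      have hjj : j ≠ j' := fun h => hne (by rw [hii, h])
      exact Finset.disjoint_left.1 (hd j j' hjj) h1.2 h2.2)
    refine le_trans (le_of_eq hB) ?_
    have hterm : ∀ t ∈ I ×ˢ (Finset.univ : Finset (Fin l)),
        1 - p ^ (A g t).card ≤ Real.exp (-(p^k)) := by
      intro t _
      have hc : (A g t).card ≤ k := by
        simp only [A, Finset.card_product, Finset.card_singleton, one_mul]
        exact Finset.card_image_le.trans (by simp)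
      have := pow_le_pow_of_le_one hp0 hp1 hc
      have := Real.one_sub_le_exp_neg (p^k)
      linarith
    refine le_trans (Finset.prod_le_prod (fun t _ => ?_) hterm) ?_
    · have := pow_le_one₀ (n := (A g t).card) hp0 hp1
      linarith
    · rw [Finset.prod_const, Finset.card_product, hI, ← Real.exp_nat_mul]
      simp only [Finset.card_univ, Fintype.card_fin]
      apply le_of_eq; congr 1; push_cast; ring
  have hS : (S.card : ℝ) ≤ (n:ℝ)^l * (n:ℝ)^(k*l) := by
    have : S.card ≤ n^l * n^(k*l) := by
      refine (Finset.card_filter_le _ _).trans ?_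
      rw [Finset.card_product, Finset.card_powersetCard]
      refine Nat.mul_le_mul ?_ ?_
      · simpa using Nat.choose_le_pow n l
      · simp [pow_mul]
    exact_mod_cast this
  have hmain : ε * (n:ℝ)^2 ≤ p * (n:ℝ)^2 + ε * (n:ℝ)^2 * ∑ x ∈ S, ∑ W, w W * F x W := by
    calc ε * (n:ℝ)^2 = ∑ W, w W * (ε * (n:ℝ)^2) := by rw [← Finset.sum_mul, hsum1, one_mul]
      _ ≤ ∑ W, w W * (W.card + ε * (n:ℝ)^2 * ∑ x ∈ S, F x W) :=
        Finset.sum_le_sum fun W _ => mul_le_mul_of_nonneg_left (hpt W) (hw0 W)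
      _ = ∑ W, w W * (W.card : ℝ) + ε * (n:ℝ)^2 * ∑ x ∈ S, ∑ W, w W * F x W := by
        simp only [mul_add, Finset.sum_add_distrib]
        congr 1
        rw [Finset.sum_comm, Finset.mul_sum]
        refine Finset.sum_congr rfl fun W _ => ?_
        rw [← Finset.mul_sum]; ring
      _ = _ := by
        have := aux_C (α := Fin n × Fin n) p
        rw [this, Fintype.card_prod, Fintype.card_fin]; push_cast; ring
  have hE : ∑ x ∈ S, ∑ W, w W * F x W < 1/(n:ℝ)^2 := by
    refine lt_of_le_of_lt ?_ hnum
    refine (Finset.sum_le_card_nsmul _ _ _ hEF).trans ?_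
    rw [nsmul_eq_mul]
    exact mul_le_mul_of_nonneg_right hS (Real.exp_pos _).le
  have hpos : 0 < ε * (n:ℝ)^2 := by positivity
  have h7 := mul_lt_mul_of_pos_left hE hpos
  have h8 : p * (n:ℝ)^2 = ε * (n:ℝ)^2 - ε * (n:ℝ)^2 * (1/(n:ℝ)^2) := by rw [hp]; ring
  linarith
end

section
/- Assume (*). Let ⟨E_n⟩_{n∈ℕ} be a stochastically independent sequence of Lebesgue measurable subsets of [0,1] such that lim_{n→∞} μ_L E_n = 0 but ∑_{n∈ℕ} (μ_L E_n)^k = ∞ for every k ≥ 1. Then there is an ultrafilter ℱ on ℕ such that the set lim_{n→ℱ} E_n = { x : {n : x ∈ E_n} ∈ ℱ } is not Lebesgue measurable. -/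
open MeasureTheory Filter
open scoped ENNReal unitInterval

/-- The statement `(*)` (Talagrand's "Axiom L"): `[0,1]` is not the union of fewer than `𝔠`
closed Lebesgue negligible sets. -/
def StarProp : Prop :=
  ∀ 𝒞 : Set (Set ℝ), Cardinal.mk 𝒞 < Cardinal.continuum →
    (∀ C ∈ 𝒞, IsClosed C ∧ volume C = 0) → ¬ Set.Icc (0 : ℝ) 1 ⊆ ⋃₀ 𝒞

theorem cdf_lip (K : Set ℝ) (hKm : MeasurableSet K) (hfin : volume K ≠ ∞) (x y : ℝ) (hxy : x ≤ y) :
    volume.real (K ∩ Set.Iic y) - volume.real (K ∩ Set.Iic x) = volume.real (K ∩ Set.Ioc x y) := by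
  have h : K ∩ Set.Iic y = (K ∩ Set.Iic x) ∪ (K ∩ Set.Ioc x y) := by
    rw [← Set.inter_union_distrib_left, Set.Iic_union_Ioc_eq_Iic hxy]
  rw [h, measureReal_union]
  · ring
  · rw [Set.disjoint_left]; rintro a ⟨_, h1⟩ ⟨_, h2⟩; exact absurd h2.1 (not_lt.2 h1)
  · exact hKm.inter measurableSet_Ioc

theorem starR (hstar : StarProp) (K : Set ℝ) (hK : IsCompact K) (hK01 : K ⊆ Set.Icc 0 1)
    (hpos : volume K ≠ 0) (J : Type) (hJ : Cardinal.mk J < Cardinal.continuum)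
    (C : J → Set ℝ) (hC : ∀ j, IsClosed (C j)) (hC0 : ∀ j, volume (C j) = 0) :
    ¬ K ⊆ ⋃ j, C j := by
  intro hsub
  have hfin : volume K ≠ ∞ := hK.measure_lt_top.ne
  have hKm := hK.measurableSet
  set m := volume.real K with hm
  have hm0 : 0 < m := ENNReal.toReal_pos hpos hfin
  set f : ℝ → ℝ := fun x => volume.real (K ∩ Set.Iic x) with hf
  have hmono : Monotone f := fun x y hxy =>
    measureReal_mono (Set.inter_subset_inter_right _ (Set.Iic_subset_Iic.2 hxy))
      (measure_ne_top_of_subset Set.inter_subset_left hfin)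
  have hle : ∀ x y, x ≤ y → f y - f x ≤ y - x := by
    intro x y hxy
    rw [hf]; simp only
    rw [cdf_lip K hKm hfin x y hxy]
    calc volume.real (K ∩ Set.Ioc x y) ≤ volume.real (Set.Ioc x y) :=
          measureReal_mono Set.inter_subset_right (by simp)
      _ = y - x := by simp [hxy]
  have hlip : LipschitzWith 1 f := by
    apply LipschitzWith.of_le_add
    intro x y
    rcases le_total x y with h | h
    · have := hmono h; have := dist_nonneg (x := x) (y := y); linarith
    · have := hle y x h; rw [Real.dist_eq, abs_of_nonneg (by linarith)]; linarith
  have hcont := hlip.continuous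
  have hf0 : f 0 = 0 := by
    have : volume (K ∩ Set.Iic 0) = 0 := by
      refine measure_mono_null (t := {0}) ?_ (by simp)
      rintro x ⟨h1, h2⟩
      exact le_antisymm h2 (hK01 h1).1
    simp [hf, measureReal_def, this]
  have hf1 : f 1 = m := by
    have : K ∩ Set.Iic 1 = K := Set.inter_eq_left.2 fun x hx => (hK01 hx).2
    simp [hf, this, hm]
  have himg : Set.Icc 0 m ⊆ f '' K := by
    by_contra hne
    obtain ⟨t, ht, htn⟩ := Set.not_subset.1 hne
    have hcl : IsClosed (f '' K) := (hK.image hcont).isClosed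
    -- the preimage of t under f is a point s
    obtain ⟨s, hs, hst⟩ : t ∈ f '' Set.Icc 0 1 := by
      apply intermediate_value_Icc zero_le_one hcont.continuousOn
      rw [hf0, hf1]; exact ht
    have hU : IsOpen (f ⁻¹' (f '' K)ᶜ) := hcl.isOpen_compl.preimage hcont
    obtain ⟨e, he, heb⟩ := Metric.isOpen_iff.1 hcl.isOpen_compl t htn
    have key : ∀ x y, x ≤ y → (∀ z, z ∈ Set.Icc x y → f z ∉ f '' K) → f x = f y := by
      intro x y hxy h
      have := cdf_lip K hKm hfin x y hxy
      have h2 : K ∩ Set.Ioc x y = ∅ := by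
        ext z; simp only [Set.mem_inter_iff, Set.mem_empty_iff_false, iff_false]
        rintro ⟨h3, h4⟩
        exact h z ⟨h4.1.le, h4.2⟩ ⟨z, h3, rfl⟩
      rw [h2] at this
      simp at this
      simp only [hf]; linarith
    by_cases hlt : t < m
    · obtain ⟨u, hu, hut⟩ : min m (t + e/2) ∈ f '' Set.Icc s 1 := by
        apply intermediate_value_Icc hs.2 hcont.continuousOn
        rw [hst, hf1]; exact ⟨le_min hlt.le (by linarith), min_le_left _ _⟩
      have := key s u hu.1 (fun z hz => heb (by
        have h1 := hmono hz.1
        have h2 := hmono hz.2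
        have h3 := min_le_right m (t + e/2)
        rw [Metric.mem_ball, Real.dist_eq, abs_lt]; constructor <;> linarith))
      rw [hst, hut] at this
      have := lt_min hlt (show t < t + e/2 by linarith)
      linarith
    · have htm : t = m := le_antisymm ht.2 (not_lt.1 hlt)
      obtain ⟨u, hu, hut⟩ : max 0 (t - e/2) ∈ f '' Set.Icc 0 s := by
        apply intermediate_value_Icc hs.1 hcont.continuousOn
        rw [hst, hf0]; exact ⟨le_max_left _ _, max_le ht.1 (by linarith)⟩
      have := key u s hu.2 (fun z hz => heb (by
        have h1 := hmono hz.1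
        have h2 := hmono hz.2
        have h3 := le_max_right 0 (t - e/2)
        rw [Metric.mem_ball, Real.dist_eq, abs_lt]; constructor <;> linarith))
      rw [hst, hut] at this
      have := max_lt (show 0 < t by linarith) (show t - e/2 < t by linarith)
      linarith
  set g : ℝ → ℝ := fun x => m⁻¹ * f x with hg
  have hglip : LipschitzWith (Real.toNNReal m⁻¹) g := by
    apply LipschitzWith.of_dist_le_mul
    intro x y
    have := hlip.dist_le_mul x y
    simp only [hg, Real.dist_eq, ← mul_sub, abs_mul] at this ⊢
    rw [Real.coe_toNNReal _ (by positivity), abs_of_pos (by positivity : 0 < m⁻¹)]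
    exact mul_le_mul_of_nonneg_left (by simpa using this) (by positivity)
  refine hstar (Set.range fun j => g '' (C j ∩ K)) (lt_of_le_of_lt Cardinal.mk_range_le hJ) ?_ ?_
  · rintro _ ⟨j, rfl⟩
    refine ⟨((hK.inter_left (hC j)).image hglip.continuous).isClosed, ?_⟩
    have h0 : volume (C j ∩ K) = 0 := measure_mono_null Set.inter_subset_left (hC0 j)
    have := hglip.hausdorffMeasure_image_le (d := 1) zero_le_one (C j ∩ K)
    rw [MeasureTheory.hausdorffMeasure_real, h0] at this
    simpa using this
  · intro t ht
    obtain ⟨x, hx, hxt⟩ := himg (show m * t ∈ Set.Icc 0 m from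
      ⟨mul_nonneg hm0.le ht.1, mul_le_of_le_one_right hm0.le ht.2⟩)
    obtain ⟨j, hj⟩ := Set.mem_iUnion.1 (hsub hx)
    refine ⟨_, ⟨j, rfl⟩, x, ⟨hj, hx⟩, ?_⟩
    simp only [hg, hxt]; field_simp

theorem starI (hstar : StarProp) (K : Set I) (hK : IsClosed K)
    (hpos : volume K ≠ 0) (J : Type) (hJ : Cardinal.mk J < Cardinal.continuum)
    (C : J → Set I) (hC : ∀ j, IsClosed (C j)) (hC0 : ∀ j, volume (C j) = 0) :
    ∃ x ∈ K, ∀ j, x ∉ C j := by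
  by_contra hcon
  push Not at hcon
  have hv : ∀ s : Set I, volume (Subtype.val '' s : Set ℝ) = volume s := fun s =>
    (unitInterval.volume_apply (s := s)).symm
  refine starR hstar (Subtype.val '' K) (hK.isCompact.image continuous_subtype_val) ?_ ?_ J hJ
    (fun j => Subtype.val '' C j)
    (fun j => ((hC j).isCompact.image continuous_subtype_val).isClosed) (fun j => ?_) ?_
  · rintro _ ⟨x, _, rfl⟩; exact x.2
  · rwa [hv]
  · rw [hv, hC0]
  · rintro _ ⟨x, hx, rfl⟩
    obtain ⟨j, hj⟩ := hcon x hx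
    exact Set.mem_iUnion.2 ⟨j, x, hj, rfl⟩

open ProbabilityTheory

theorem div_ae {Ω : Type*} [MeasurableSpace Ω] (μ : Measure Ω) [IsProbabilityMeasure μ]
    (X : ℕ → Ω → ℝ) (hXm : ∀ n, Measurable (X n)) (h0 : ∀ n ω, 0 ≤ X n ω) (h1 : ∀ n ω, X n ω ≤ 1)
    (hind : iIndepFun X μ) (hdiv : ∑' n, ENNReal.ofReal (∫ ω, X n ω ∂μ) = ∞) :
    ∀ᵐ ω ∂μ, ∑' n, ENNReal.ofReal (X n ω) = ∞ := by
  have hint : ∀ n, Integrable (X n) μ := fun n =>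
    Integrable.of_bound (hXm n).aestronglyMeasurable 1 (ae_of_all _ fun ω => by
      rw [Real.norm_eq_abs, abs_of_nonneg (h0 n ω)]; exact h1 n ω)
  set e : ℕ → ℝ := fun n => ∫ ω, X n ω ∂μ with he
  have he0 : ∀ n, 0 ≤ e n := fun n => integral_nonneg (h0 n)
  have hmgf : ∀ n, mgf (X n) μ (-1) ≤ Real.exp (-(e n / 2)) := by
    intro n
    have h2 : mgf (X n) μ (-1) ≤ ∫ ω, (1 - X n ω / 2) ∂μ := by
      apply integral_mono_of_nonneg
      · exact ae_of_all _ fun ω => (Real.exp_pos _).le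
      · exact (integrable_const _).sub ((hint n).div_const 2)
      · refine ae_of_all _ fun ω => ?_
        have ha := h0 n ω
        have hb := h1 n ω
        have h3 : Real.exp (-X n ω) ≤ (1 + X n ω)⁻¹ := by
          rw [Real.exp_neg]
          gcongr
          linarith [Real.add_one_le_exp (X n ω)]
        have h4 : (1 + X n ω)⁻¹ ≤ 1 - X n ω / 2 := by
          rw [inv_le_iff_one_le_mul₀ (by linarith)]
          nlinarith
        simpa using h3.trans h4
    rw [integral_sub (integrable_const _) ((hint n).div_const 2), integral_div] at h2
    have := Real.add_one_le_exp (-(e n / 2))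
    simp at h2
    linarith
  have hS : ∀ N : ℕ, mgf (∑ i ∈ Finset.range N, X i) μ (-1)
      ≤ Real.exp (-(∑ i ∈ Finset.range N, e i) / 2) := by
    intro N
    rw [hind.mgf_sum hXm]
    calc _ ≤ ∏ i ∈ Finset.range N, Real.exp (-(e i / 2)) :=
          Finset.prod_le_prod (fun i _ => mgf_nonneg) (fun i _ => hmgf i)
      _ = _ := by rw [← Real.exp_sum]; congr 1; rw [Finset.sum_neg_distrib, ← Finset.sum_div, neg_div]
  have hbd : ∀ (M : ℕ) (N : ℕ), μ.real {ω | ∑' n, ENNReal.ofReal (X n ω) ≤ M} ≤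
      Real.exp M * Real.exp (-(∑ i ∈ Finset.range N, e i) / 2) := by
    intro M N
    have hi : Integrable (fun ω => Real.exp (-1 * (∑ i ∈ Finset.range N, X i) ω)) μ := by
      refine Integrable.of_bound (C := 1) ?_ (ae_of_all _ fun ω => ?_)
      · apply Measurable.aestronglyMeasurable
        fun_prop
      · rw [Real.norm_eq_abs, abs_of_pos (Real.exp_pos _), Real.exp_le_one_iff]
        have : 0 ≤ (∑ i ∈ Finset.range N, X i) ω := by
          rw [Finset.sum_apply]; exact Finset.sum_nonneg fun i _ => h0 i ω
        linarith
    have := measure_le_le_exp_mul_mgf (μ := μ) (X := ∑ i ∈ Finset.range N, X i) (t := -1) M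
      (by norm_num) hi
    calc _ ≤ μ.real {ω | (∑ i ∈ Finset.range N, X i) ω ≤ M} := by
          refine measureReal_mono ?_ (measure_ne_top _ _)
          intro ω hω
          simp only [Set.mem_ofPred_eq] at hω ⊢
          rw [Finset.sum_apply]
          have h5 := (ENNReal.sum_le_tsum (Finset.range N)).trans hω
          rw [← ENNReal.ofReal_sum_of_nonneg (fun i _ => h0 i ω), ← ENNReal.ofReal_natCast] at h5
          exact (ENNReal.ofReal_le_ofReal_iff (by positivity)).1 h5
      _ ≤ _ := this
      _ ≤ _ := by
          have h6 : - (-1:ℝ) * M = M := by ring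
          rw [h6]
          exact mul_le_mul_of_nonneg_left (hS N) (Real.exp_pos _).le
  have htend : Tendsto (fun N => ∑ i ∈ Finset.range N, e i) atTop atTop := by
    rw [← not_summable_iff_tendsto_nat_atTop_of_nonneg he0]
    intro hs
    exact hs.tsum_ofReal_ne_top hdiv
  have hz : ∀ M : ℕ, μ {ω | ∑' n, ENNReal.ofReal (X n ω) ≤ M} = 0 := by
    intro M
    have hl : Tendsto (fun N => Real.exp M * Real.exp (-(∑ i ∈ Finset.range N, e i) / 2)) atTop
        (nhds (Real.exp M * 0)) := by
      apply Tendsto.const_mul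
      apply Real.tendsto_exp_atBot.comp
      apply Tendsto.atBot_div_const (by norm_num)
      exact tendsto_neg_atTop_atBot.comp htend
    have := ge_of_tendsto' hl (hbd M)
    rw [mul_zero] at this
    have := le_antisymm this measureReal_nonneg
    rwa [measureReal_eq_zero_iff] at this
  have hz2 : ∀ᵐ ω ∂μ, ∀ M : ℕ, ¬ (∑' n, ENNReal.ofReal (X n ω) ≤ M) := by
    rw [ae_all_iff]; intro M
    rw [ae_iff]; simpa using hz M
  filter_upwards [hz2] with ω hω
  by_contra hne
  obtain ⟨M, hM⟩ := ENNReal.exists_nat_gt hne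
  exact hω M hM.le

/-- The sets to select. -/
def TT (E : ℕ → Set I) (b : Bool) (n : ℕ) : Set I := if b then E n else (E n)ᶜ

noncomputable def wt (E : ℕ → Set I) (A : Set ℕ) (k n : ℕ) : ℝ≥0∞ :=
  A.indicator (fun n => (volume (E n)) ^ k) n

def Big (E : ℕ → Set I) (A : Set ℕ) : Prop := ∀ k, 1 ≤ k → ∑' n, wt E A k n = ∞

theorem wt_le (E : ℕ → Set I) (A : Set ℕ) (k n : ℕ) : wt E A k n ≤ 1 := by
  unfold wt
  refine Set.indicator_apply_le' (fun _ => pow_le_one₀ (by simp) prob_le_one) (fun _ => by simp)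

theorem main_ae (E : ℕ → Set I)
    (hmeas : ∀ n, MeasurableSet (E n))
    (hind : ∀ F : Finset ℕ,
      (volume : Measure I) (⋂ n ∈ F, E n) = ∏ n ∈ F, (volume : Measure I) (E n))
    (hlim : Tendsto (fun n => (volume : Measure I) (E n)) atTop (nhds 0))
    (A : Set ℕ) (hA : Big E A) (b : Bool) (k : ℕ) (hk : 1 ≤ k) :
    ∀ᵐ x : I, ∑' n, (TT E b n).indicator (fun _ => wt E A k n) x = ∞ := by
  have hTm : ∀ n, MeasurableSet (TT E b n) := by
    intro n; unfold TT; split_ifs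
    · exact hmeas n
    · exact (hmeas n).compl
  have hwt : ∀ n, wt E A k n ≠ ∞ := fun n => ne_top_of_le_ne_top (by simp) (wt_le E A k n)
  set X : ℕ → I → ℝ := fun n => (TT E b n).indicator (fun _ => (wt E A k n).toReal) with hX
  have hI : iIndepFun X (volume : Measure I) := by
    have h1 := ((iIndepSet_iff_meas_biInter hmeas).2 hind).iIndepFun_indicator (β := ℝ) (m := inferInstance)
    have h2 := h1.comp (fun n t => (wt E A k n).toReal * (if b then t else 1 - t))
      (fun n => by cases b <;> simp <;> fun_prop)
    suffices hXeq : X = fun i => (fun t => (wt E A k i).toReal * (if b then t else 1 - t)) ∘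
        (E i).indicator fun _ => (1 : ℝ) by
      rw [hXeq]; exact h2
    funext n x
    simp only [hX, TT, Function.comp]
    cases b <;> by_cases hx : x ∈ E n <;> simp [hx]
  have hXe : ∀ n x, ENNReal.ofReal (X n x) = (TT E b n).indicator (fun _ => wt E A k n) x := by
    intro n x
    by_cases hx : x ∈ TT E b n <;> simp [hX, hx, hwt]
  have := div_ae (volume : Measure I) X (fun n => measurable_const.indicator (hTm n))
    (fun n x => Set.indicator_nonneg (fun _ _ => ENNReal.toReal_nonneg) x)
    (fun n x => Set.indicator_apply_le' (fun _ => ENNReal.toReal_le_of_le_ofReal zero_le_one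
      (by simpa using wt_le E A k n)) (fun _ => zero_le_one)) hI ?_
  · simpa only [hXe] using this
  have hint : ∀ n, ENNReal.ofReal (∫ x, X n x) = volume (TT E b n) * wt E A k n := by
    intro n
    simp only [hX]
    rw [integral_indicator_const _ (hTm n), smul_eq_mul, measureReal_def, ← ENNReal.toReal_mul,
      ENNReal.ofReal_toReal]
    exact ENNReal.mul_ne_top (measure_ne_top _ _) (hwt n)
  simp only [hint]
  cases b
  · have hev : ∀ᶠ n in atTop, volume (E n) < 1/2 := hlim.eventually_lt_const (by simp)
    obtain ⟨N, hN⟩ := eventually_atTop.1 hev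
    by_contra hne
    have hsh : ∑' n, volume (TT E false (n + N)) * wt E A k (n + N) ≠ ∞ := by
      refine ne_top_of_le_ne_top hne ?_
      exact ENNReal.tsum_comp_le_tsum_of_injective (add_left_injective N)
        (fun n => volume (TT E false n) * wt E A k n)
    have h3 : ∑' n, wt E A k (n + N) ≠ ∞ := by
      refine ne_top_of_le_ne_top (ENNReal.mul_ne_top (a := 2) (by simp) hsh) ?_
      rw [← ENNReal.tsum_mul_left]
      refine ENNReal.tsum_le_tsum fun n => ?_
      have h4 : 1/2 ≤ volume (TT E false (n + N)) := by
        simp only [TT, Bool.false_eq_true, if_false]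
        rw [prob_compl_eq_one_sub (hmeas _)]
        have h5 := hN (n+N) (by omega)
        calc (1/2 : ℝ≥0∞) = 1 - 1/2 := by simp
          _ ≤ _ := tsub_le_tsub_left h5.le _
      rw [← mul_assoc]
      calc wt E A k (n+N) = 2 * (1/2) * wt E A k (n+N) := by
            rw [one_div, ENNReal.mul_inv_cancel (by simp) (by simp), one_mul]
        _ ≤ _ := by gcongr
    have h6 := hA k hk
    rw [← ENNReal.summable.sum_add_tsum_nat_add' (k := N)] at h6
    have h7 : ∑ i ∈ Finset.range N, wt E A k i ≠ ∞ :=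
      (ENNReal.sum_lt_top.2 fun i _ => (hwt i).lt_top).ne
    exact ENNReal.add_ne_top.2 ⟨h7, h3⟩ h6
  · rw [← hA (k+1) (by omega)]
    congr 1; ext n
    simp only [TT, wt]
    by_cases hn : n ∈ A <;> simp [hn, pow_succ, mul_comm]

theorem closed_aux (U : ℕ → Set I) (hU : ∀ n, IsOpen (U n)) (w : ℕ → ℝ≥0∞) (M : ℝ≥0∞) :
    IsClosed {x : I | ∑' n, (U n).indicator (fun _ => w n) x ≤ M} :=
  lowerSemicontinuous_iff_isClosed_preimage.1
    (lowerSemicontinuous_tsum fun n => (hU n).lowerSemicontinuous_indicator (by simp)) M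

theorem lusin_aux (E : ℕ → Set I) (hmeas : ∀ n, MeasurableSet (E n)) (K : Set I) (hK : IsClosed K)
    (hpos : volume K ≠ 0) : ∃ K' ⊆ K, IsClosed K' ∧ volume K' ≠ 0 ∧
      ∀ b n, IsOpen (TT E b n ∪ K'ᶜ) := by
  obtain ⟨ε, hε, hεs⟩ := ENNReal.exists_pos_sum_of_countable' hpos (ℕ × Bool)
  have hTm : ∀ q : ℕ × Bool, MeasurableSet (TT E q.2 q.1) := by
    intro q; unfold TT; split_ifs
    · exact hmeas _
    · exact (hmeas _).compl
  have hex := fun q : ℕ × Bool => (hTm q).exists_isClosed_sdiff_lt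
    (measure_ne_top (volume : Measure I) _) (hε q).ne'
  choose F hFs hFc hFlt using hex
  have hcov : ∀ n x, x ∈ TT E true n ∨ x ∈ TT E false n := by
    intro n x; simp only [TT]; by_cases h : x ∈ E n <;> simp [h]
  refine ⟨K ∩ ⋂ n, (F (n, true) ∪ F (n, false)), Set.inter_subset_left,
    hK.inter (isClosed_iInter fun n => (hFc _).union (hFc _)), ?_, ?_⟩
  · intro h0
    have hsub : K ⊆ (K ∩ ⋂ n, (F (n, true) ∪ F (n, false))) ∪ ⋃ q, (TT E q.2 q.1 \ F q) := by
      intro x hx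
      by_cases hxc : x ∈ ⋂ n, (F (n, true) ∪ F (n, false))
      · exact Or.inl ⟨hx, hxc⟩
      · right
        rw [Set.mem_iInter] at hxc
        push Not at hxc
        obtain ⟨n, hn⟩ := hxc
        rw [Set.mem_union, not_or] at hn
        rcases hcov n x with h | h
        · exact Set.mem_iUnion.2 ⟨(n, true), h, hn.1⟩
        · exact Set.mem_iUnion.2 ⟨(n, false), h, hn.2⟩
    have h1 := (measure_mono (μ := (volume : Measure I)) hsub).trans (measure_union_le _ _)
    rw [h0, zero_add] at h1
    have h2 := (h1.trans (measure_iUnion_le _)).trans (ENNReal.tsum_le_tsum fun q => (hFlt q).le)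
    exact absurd hεs (not_lt.2 h2)
  · intro b n
    rw [← isClosed_compl_iff]
    set K' := K ∩ ⋂ n, (F (n, true) ∪ F (n, false)) with hK'
    have hK'c : IsClosed K' := hK.inter (isClosed_iInter fun n => (hFc _).union (hFc _))
    have : (TT E b n ∪ K'ᶜ)ᶜ = F (n, !b) ∩ K' := by
      ext x
      simp only [Set.compl_union, compl_compl, Set.mem_inter_iff, Set.mem_compl_iff]
      refine and_congr_left fun hx => ?_
      have hx2 := Set.mem_iInter.1 hx.2 n
      have ht := @hFs (n, true) x
      have hf := @hFs (n, false) x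
      simp only [TT] at ht hf ⊢
      simp at ht hf hx2
      cases b <;> simp <;> tauto
    rw [this]
    exact (hFc _).inter hK'c

theorem card_closed_le (ι : Type) (f : ι → Set I) (hf : Function.Injective f)
    (hm : ∀ i, IsClosed (f i)) : Cardinal.mk ι ≤ Cardinal.continuum := by
  have hB := (TopologicalSpace.isBasis_countableBasis I).borel_eq_generateFrom
  have h2 : ∀ i, @MeasurableSet I (MeasurableSpace.generateFrom
      (TopologicalSpace.countableBasis I)) (f i) := by
    intro i
    rw [← hB, ← BorelSpace.measurable_eq (α := I)]
    exact (hm i).measurableSet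
  have h3 := MeasurableSpace.cardinal_measurableSet_le_continuum
    (s := TopologicalSpace.countableBasis I)
    ((TopologicalSpace.countable_countableBasis I).le_aleph0.trans Cardinal.aleph0_le_continuum)
  refine le_trans (Cardinal.mk_le_of_injective (f := fun i => (⟨f i, h2 i⟩ :
    {t | @MeasurableSet I (MeasurableSpace.generateFrom
      (TopologicalSpace.countableBasis I)) t})) ?_) h3
  intro i j hij
  exact hf (congrArg Subtype.val hij)

theorem step_aux (hstar : StarProp) (E : ℕ → Set I)
    (hmeas : ∀ n, MeasurableSet (E n))
    (hind : ∀ F : Finset ℕ,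
      (volume : Measure I) (⋂ n ∈ F, E n) = ∏ n ∈ F, (volume : Measure I) (E n))
    (hlim : Tendsto (fun n => (volume : Measure I) (E n)) atTop (nhds 0))
    (J : Type) (hJ : Cardinal.mk J < Cardinal.continuum) (A : J → Set ℕ)
    (K : Set I) (hK : IsClosed K) (hpos : volume K ≠ 0) (b : Bool) :
    ∃ z ∈ K, ∀ j, Big E (A j) → Big E (A j ∩ {n | z ∈ TT E b n}) := by
  obtain ⟨K', hK's, hK'c, hK'0, hop⟩ := lusin_aux E hmeas K hK hpos
  let J' := {j : J // Big E (A j)} × {k : ℕ // 1 ≤ k} × ℕ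
  have hJ' : Cardinal.mk J' < Cardinal.continuum := by
    simp only [J', Cardinal.mk_prod, Cardinal.lift_id]
    refine Cardinal.mul_lt_of_lt Cardinal.aleph0_le_continuum
      (lt_of_le_of_lt (Cardinal.mk_subtype_le _) hJ) ?_
    refine Cardinal.mul_lt_of_lt Cardinal.aleph0_le_continuum ?_ ?_
    · exact lt_of_le_of_lt Cardinal.mk_le_aleph0 Cardinal.aleph0_lt_continuum
    · exact lt_of_le_of_lt Cardinal.mk_le_aleph0 Cardinal.aleph0_lt_continuum
  have hnull : ∀ q : J', volume (K' ∩ {x : I | ∑' n, (TT E b n ∪ K'ᶜ).indicator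
      (fun _ => wt E (A q.1.1) q.2.1.1 n) x ≤ (q.2.2 : ℝ≥0∞)}) = 0 := by
    rintro ⟨⟨j, hj⟩, ⟨k, hk⟩, M⟩
    have := main_ae E hmeas hind hlim (A j) hj b k hk
    rw [ae_iff] at this
    refine measure_mono_null ?_ this
    rintro x ⟨hxK, hx⟩
    rw [Set.mem_ofPred_eq] at hx
    change ¬ _
    intro htop
    have h3 : ∑' n, (TT E b n ∪ K'ᶜ).indicator (fun _ => wt E (A j) k n) x = ∞ := by
      rw [← htop]; congr 1; ext n
      by_cases h1 : x ∈ TT E b n <;> simp [h1, hxK]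
    rw [h3] at hx
    exact absurd hx (by simp)
  obtain ⟨z, hzK, hz⟩ := starI hstar K' hK'c hK'0 J' hJ'
    (fun q => K' ∩ {x : I | ∑' n, (TT E b n ∪ K'ᶜ).indicator
      (fun _ => wt E (A q.1.1) q.2.1.1 n) x ≤ (q.2.2 : ℝ≥0∞)})
    (fun q => hK'c.inter (closed_aux _ (hop b) _ _)) hnull
  · refine ⟨z, hK's hzK, fun j hj k hk => ?_⟩
    by_contra hne
    obtain ⟨M, hM⟩ := ENNReal.exists_nat_gt hne
    refine hz (⟨j, hj⟩, ⟨k, hk⟩, M) ⟨hzK, ?_⟩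
    rw [Set.mem_ofPred_eq]
    refine le_trans (le_of_eq ?_) hM.le
    congr 1; ext n
    simp only [wt]
    by_cases h1 : z ∈ TT E b n <;> by_cases h2 : n ∈ A j <;> simp [h1, h2, hzK]

theorem mk_finset_lt (α : Type) (h : Cardinal.mk α < Cardinal.continuum) :
    Cardinal.mk (Finset α) < Cardinal.continuum := by
  rcases finite_or_infinite α with hα | hα
  · exact (Cardinal.lt_aleph0_of_finite _).trans Cardinal.aleph0_lt_continuum
  · rwa [Cardinal.mk_finset_of_infinite]

theorem main_meas (hstar : StarProp) (E : ℕ → Set I)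
    (hmeas : ∀ n, MeasurableSet (E n))
    (hind : ∀ F : Finset ℕ,
      (volume : Measure I) (⋂ n ∈ F, E n) = ∏ n ∈ F, (volume : Measure I) (E n))
    (hlim : Tendsto (fun n => (volume : Measure I) (E n)) atTop (nhds 0))
    (hdiv : ∀ k : ℕ, 1 ≤ k → ∑' n, ((volume : Measure I) (E n)) ^ k = ∞) :
    ∃ ℱ : Ultrafilter ℕ,
      ¬ NullMeasurableSet {x : I | {n | x ∈ E n} ∈ ℱ} (volume : Measure I) := by
  classical
  obtain ⟨ι, c, b, hsurj, hι⟩ : ∃ (ι : Type) (c : ι → {K : Set I // IsClosed K ∧ volume K ≠ 0})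
      (b : ι → Bool), (∀ p q, ∃ i, c i = p ∧ b i = q) ∧ Cardinal.mk ι ≤ Cardinal.continuum := by
    refine ⟨{K : Set I // IsClosed K ∧ volume K ≠ 0} × Bool, Prod.fst, Prod.snd,
      fun p q => ⟨(p, q), rfl, rfl⟩, ?_⟩
    have h1 := card_closed_le {K : Set I // IsClosed K ∧ volume K ≠ 0} Subtype.val
      Subtype.val_injective (fun i => i.2.1)
    simp only [Cardinal.mk_prod, Cardinal.lift_id]
    exact Cardinal.mul_le_of_le Cardinal.aleph0_le_continuum h1
      (Cardinal.mk_le_aleph0.trans Cardinal.aleph0_le_continuum)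
  obtain ⟨_, _, hord⟩ := Cardinal.exists_ord_eq_type_lt ι
  have hstep : ∀ (i : ι) (x : ∀ j, j < i → I), ∃ z ∈ (c i).1, ∀ F : Finset (Set.Iio i),
      Big E {n | ∀ j ∈ F, x j.1 j.2 ∈ TT E (b j.1) n} →
      Big E ({n | ∀ j ∈ F, x j.1 j.2 ∈ TT E (b j.1) n} ∩ {n | z ∈ TT E (b i) n}) := by
    intro i x
    exact step_aux hstar E hmeas hind hlim (Finset (Set.Iio i))
      (mk_finset_lt _ (lt_of_lt_of_le (Cardinal.mk_Iio_lt i hord) hι)) _ (c i).1 (c i).2.1 (c i).2.2 (b i)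
  choose G hGK hG using hstep
  let x : ι → I := (wellFounded_lt (α := ι)).fix G
  have hx : ∀ i, x i = G i (fun j _ => x j) := fun i => WellFounded.fix_eq _ _ _
  have hbig : ∀ F : Finset ι, Big E {n | ∀ j ∈ F, x j ∈ TT E (b j) n} := by
    intro F
    induction F using Finset.induction_on_max with
    | empty =>
      intro k hk
      simpa [wt] using hdiv k hk
    | insert a s ha ih =>
      have h1 := hG a (fun j _ => x j) (s.attach.image fun j => ⟨j.1, ha j.1 j.2⟩)
      rw [← hx] at h1
      have h2 : {n | ∀ j ∈ (s.attach.image fun j => (⟨j.1, ha j.1 j.2⟩ : Set.Iio a)),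
          x j.1 ∈ TT E (b j.1) n} = {n | ∀ j ∈ s, x j ∈ TT E (b j) n} := by
        ext n
        constructor
        · intro h j hj
          exact h ⟨j, ha j hj⟩ (Finset.mem_image.2 ⟨⟨j, hj⟩, Finset.mem_attach _ _, rfl⟩)
        · intro h j hj
          obtain ⟨q, _, rfl⟩ := Finset.mem_image.1 hj
          exact h q.1 q.2
      rw [h2] at h1
      convert h1 ih using 1
      ext n
      simp [and_comm]
  obtain ⟨ℱ, hℱ⟩ := Ultrafilter.exists_ultrafilter_of_finite_inter_nonempty
    (Set.range fun i : ι => {n | x i ∈ TT E (b i) n}) (by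
      intro T hT
      have hT' : ∃ F : Finset ι, F.image (fun i : ι => {n | x i ∈ TT E (b i) n}) = T := by
        rw [← Set.image_univ] at hT
        obtain ⟨F, _, hF⟩ := Finset.subset_set_image_iff.1 hT
        exact ⟨F, hF⟩
      obtain ⟨F, rfl⟩ := hT'
      by_contra hne
      have h1 := hbig F 1 le_rfl
      have h2 : {n | ∀ j ∈ F, x j ∈ TT E (b j) n} = ∅ := by
        rw [← Set.not_nonempty_iff_eq_empty]
        rintro ⟨n, hn⟩
        apply hne
        refine ⟨n, ?_⟩
        simpa using hn
      rw [h2] at h1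
      simp [wt] at h1)
  refine ⟨ℱ, fun hS => ?_⟩
  have hmem : ∀ i : ι, {n | x i ∈ TT E (b i) n} ∈ ℱ := fun i => hℱ ⟨i, rfl⟩
  have hxK : ∀ i : ι, x i ∈ (c i).1 := fun i => by rw [hx]; exact hGK _ _
  -- a null measurable set of positive measure contains a closed set of positive measure
  have hreg : ∀ S : Set I, NullMeasurableSet S volume → volume S ≠ 0 →
      ∃ K ⊆ S, IsClosed K ∧ volume K ≠ 0 := by
    intro S hS h0
    obtain ⟨t, hts, htm, hte⟩ := hS.exists_measurable_subset_ae_eq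
    have ht0 : 0 < volume t := by rw [measure_congr hte]; exact pos_iff_ne_zero.2 h0
    obtain ⟨K, hKt, hKc, hK⟩ := htm.exists_lt_isClosed_of_ne_top (measure_ne_top _ _) ht0
    exact ⟨K, hKt.trans hts, hKc, hK.ne'⟩
  by_cases h0 : volume {x : I | {n | x ∈ E n} ∈ ℱ} = 0
  · have h1 : volume ({x : I | {n | x ∈ E n} ∈ ℱ}ᶜ) ≠ 0 := by
      intro h2
      have h3 := measure_union_le (μ := (volume : Measure I)) {x : I | {n | x ∈ E n} ∈ ℱ}
        ({x : I | {n | x ∈ E n} ∈ ℱ}ᶜ)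
      rw [Set.union_compl_self, h0, h2] at h3
      simp at h3
    obtain ⟨K, hKs, hKc, hK0⟩ := hreg _ hS.compl h1
    obtain ⟨i, hci, hbi⟩ := hsurj ⟨K, hKc, hK0⟩ true
    have h3 := hxK i
    rw [hci] at h3
    have h4 := hKs h3
    have h5 := hmem i
    rw [hbi] at h5
    exact h4 h5
  · obtain ⟨K, hKs, hKc, hK0⟩ := hreg _ hS h0
    obtain ⟨i, hci, hbi⟩ := hsurj ⟨K, hKc, hK0⟩ false
    have h3 := hxK i
    rw [hci] at h3
    have h4 : {n | x i ∈ E n} ∈ ℱ := hKs h3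
    have h5 := hmem i
    rw [hbi] at h5
    have h6 : {n | x i ∈ E n}ᶜ ∈ ℱ := h5
    exact (Ultrafilter.compl_mem_iff_notMem.1 h6) h4

/-- **Theorem 2E(e).**  Assume `(*)`.  Let `⟨E_n⟩` be a stochastically independent sequence of
Lebesgue measurable subsets of `[0,1]` with `lim_n μ_L E_n = 0` but `∑_n (μ_L E_n)^k = ∞` for
every `k ≥ 1`.  Then there is an ultrafilter `ℱ` on `ℕ` such that
`lim_{n→ℱ} E_n = { x : {n : x ∈ E_n} ∈ ℱ }` is not Lebesgue measurable. -/
theorem stmt_17 (hstar : StarProp) (E : ℕ → Set I)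
    (hmeas : ∀ n, NullMeasurableSet (E n) (volume : Measure I))
    (hind : ∀ F : Finset ℕ,
      (volume : Measure I) (⋂ n ∈ F, E n) = ∏ n ∈ F, (volume : Measure I) (E n))
    (hlim : Tendsto (fun n => (volume : Measure I) (E n)) atTop (nhds 0))
    (hdiv : ∀ k : ℕ, 1 ≤ k → ∑' n, ((volume : Measure I) (E n)) ^ k = ∞) :
    ∃ ℱ : Ultrafilter ℕ,
      ¬ NullMeasurableSet {x : I | {n | x ∈ E n} ∈ ℱ} (volume : Measure I) := by
  have hae : ∀ n, toMeasurable volume (E n) =ᵐ[volume] E n := fun n => (hmeas n).toMeasurable_ae_eq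
  have hv : ∀ n, (volume : Measure I) (toMeasurable volume (E n)) = volume (E n) :=
    fun n => measure_toMeasurable _
  obtain ⟨ℱ, hℱ⟩ := main_meas hstar (fun n => toMeasurable volume (E n))
    (fun n => measurableSet_toMeasurable _ _) (fun F => by
      simp only [hv]
      rw [← hind F]
      refine measure_congr ?_
      exact Filter.EventuallyEq.countable_bInter F.countable_toSet (fun n _ => hae n)) (by simpa only [hv] using hlim)
    (by simpa only [hv] using hdiv)
  refine ⟨ℱ, fun hS => hℱ (hS.congr ?_)⟩
  have hall : ∀ᵐ x : I, ∀ n, (x ∈ toMeasurable volume (E n) ↔ x ∈ E n) := by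
    rw [ae_all_iff]
    exact fun n => (hae n).mem_iff
  rw [eventuallyEq_set]
  filter_upwards [hall] with x hx
  change ({n | x ∈ E n} ∈ ℱ) ↔ ({n | x ∈ toMeasurable volume (E n)} ∈ ℱ)
  simp only [hx]
end
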